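/- arXiv:2510.00368 — 4 statements merged into one kernel-verified Lean document; each statement's English description precedes it below -/
import Mathlib

section
/- For every real number z, |GELU(z) − (z/2 + z²/√(2π))| ≤ |z|³/6; that is, the second-order Taylor expansion of GELU at 0 is z/2 + z²/√(2π), with Lagrange remainder bounded in absolute value by |z|³/6. -/
/-!
Since `Φ(0) = 1/2`, the remainder equals `(z / √(2π)) ∫₀ᶻ (exp (-t²/2) - 1) dt`. The integrand
satisfies `|exp (-t²/2) - 1| ≤ min 1 (t²/2) ≤ (4/5) |t|`, so the integral is at most `(2/5) z²` in
absolute value, and `√(2π) ≥ 12/5` turns the factor `2/5` into `1/6`.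
-/

open MeasureTheory

/-- The cumulative distribution function of the standard normal distribution. -/
noncomputable def stdNormalCdf (x : ℝ) : ℝ :=
  ∫ t in Set.Iic x, (1 / Real.sqrt (2 * Real.pi)) * Real.exp (-t ^ 2 / 2)

/-- The Gaussian error linear unit. -/
noncomputable def GELU (x : ℝ) : ℝ := x * stdNormalCdf x

lemma integrable_exp_neg_sq_half : Integrable (fun t : ℝ => Real.exp (-t ^ 2 / 2)) := by
  have h := integrable_exp_neg_mul_sq (b := 1 / 2) (by norm_num)
  refine h.congr (Filter.Eventually.of_forall fun t => ?_)
  simp only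
  ring_nf

lemma stdNormalCdf_zero : stdNormalCdf 0 = 1 / 2 := by
  have h := integral_gaussian_Ioi (1 / 2)
  have h2 := integral_comp_neg_Iic (0 : ℝ) (fun t : ℝ => Real.exp (-(1 / 2) * t ^ 2))
  rw [neg_zero, h] at h2
  unfold stdNormalCdf
  rw [integral_const_mul]
  have h3 : ∫ t in Set.Iic (0 : ℝ), Real.exp (-t ^ 2 / 2) = √(Real.pi / (1 / 2)) / 2 := by
    rw [← h2]
    congr 1
    ext t
    ring_nf
  have hpi : √(2 * Real.pi) ≠ 0 := by positivity
  rw [h3, show Real.pi / (1 / 2) = 2 * Real.pi by ring]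
  field_simp

lemma stdNormalCdf_eq (z : ℝ) : stdNormalCdf z =
    1 / 2 + 1 / √(2 * Real.pi) * ∫ t in (0 : ℝ)..z, Real.exp (-t ^ 2 / 2) := by
  have h := intervalIntegral.integral_Iic_sub_Iic (a := 0) (b := z)
    (integrable_exp_neg_sq_half.const_mul (1 / √(2 * Real.pi))).integrableOn
    (integrable_exp_neg_sq_half.const_mul (1 / √(2 * Real.pi))).integrableOn
  rw [intervalIntegral.integral_const_mul] at h
  change stdNormalCdf z - stdNormalCdf 0 = _ at h
  rw [stdNormalCdf_zero] at h
  linarith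

lemma abs_exp_neg_sq_half_sub_one_le (t : ℝ) :
    |Real.exp (-t ^ 2 / 2) - 1| ≤ 4 / 5 * |t| := by
  have h1 : Real.exp (-t ^ 2 / 2) ≤ 1 := Real.exp_le_one_iff.2 (by nlinarith [sq_nonneg t])
  have h2 := Real.add_one_le_exp (-t ^ 2 / 2)
  have h3 := Real.exp_pos (-t ^ 2 / 2)
  rw [abs_of_nonpos (by linarith)]
  -- The quadratic bound `t²/2` serves for `|t| ≤ 8/5`, the constant bound `1` beyond.
  rcases le_total |t| (8 / 5) with h | h
  · nlinarith [sq_abs t, abs_nonneg t]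
  · linarith

lemma abs_integral_exp_neg_sq_half_sub_one_le (z : ℝ) :
    |∫ t in (0 : ℝ)..z, (Real.exp (-t ^ 2 / 2) - 1)| ≤ 2 / 5 * z ^ 2 := by
  have h := intervalIntegral.norm_integral_le_abs_of_norm_le (μ := volume) (a := 0) (b := z)
    (f := fun t : ℝ => Real.exp (-t ^ 2 / 2) - 1) (g := fun t : ℝ => 4 / 5 * |t|)
    (Filter.Eventually.of_forall fun t => abs_exp_neg_sq_half_sub_one_le t)
    (Continuous.intervalIntegrable (by fun_prop) _ _)
  have key : |∫ t in (0 : ℝ)..z, 4 / 5 * (|t|)| = 2 / 5 * z ^ 2 := by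
    rw [intervalIntegral.integral_const_mul]
    rcases le_total 0 z with hz | hz
    · have : ∫ t in (0 : ℝ)..z, |t| = ∫ t in (0 : ℝ)..z, t := by
        refine intervalIntegral.integral_congr fun t ht => ?_
        rw [Set.uIcc_of_le hz] at ht
        exact abs_of_nonneg ht.1
      rw [this, integral_id, abs_of_nonneg (by nlinarith)]
      ring
    · have : ∫ t in (0 : ℝ)..z, |t| = ∫ t in (0 : ℝ)..z, -t := by
        refine intervalIntegral.integral_congr fun t ht => ?_
        rw [Set.uIcc_of_ge hz] at ht
        exact abs_of_nonpos ht.2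
      rw [this, intervalIntegral.integral_neg, integral_id, abs_of_nonpos (by nlinarith)]
      ring
  exact h.trans key.le

/-- The second-order Taylor expansion of GELU at `0` is `z/2 + z²/√(2π)`, with
remainder bounded in absolute value by `|z|³/6`. -/
theorem gelu_taylor_remainder (z : ℝ) :
    |GELU z - (z / 2 + z ^ 2 / Real.sqrt (2 * Real.pi))| ≤ |z| ^ 3 / 6 := by
  have hI : ∫ t in (0 : ℝ)..z, (Real.exp (-t ^ 2 / 2) - 1)
      = (∫ t in (0 : ℝ)..z, Real.exp (-t ^ 2 / 2)) - z := by
    rw [intervalIntegral.integral_sub (Continuous.intervalIntegrable (by fun_prop) _ _)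
      (Continuous.intervalIntegrable (by fun_prop) _ _)]
    simp
  have hb := abs_integral_exp_neg_sq_half_sub_one_le z
  have hs : 12 / 5 ≤ √(2 * Real.pi) := Real.le_sqrt_of_sq_le (by linarith [Real.pi_gt_three])
  have hc : 1 / √(2 * Real.pi) ≤ 5 / 12 := by
    rw [div_le_iff₀ (by linarith)]
    linarith
  have hc0 : 0 ≤ 1 / √(2 * Real.pi) := by positivity
  have hrem : GELU z - (z / 2 + z ^ 2 / √(2 * Real.pi))
      = z * (1 / √(2 * Real.pi) * ∫ t in (0 : ℝ)..z, (Real.exp (-t ^ 2 / 2) - 1)) := by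
    rw [hI, GELU, stdNormalCdf_eq]
    ring
  rw [hrem, abs_mul, abs_mul, abs_of_nonneg hc0]
  calc _ ≤ |z| * (5 / 12 * (2 / 5 * z ^ 2)) := by gcongr
    _ = |z| ^ 3 / 6 := by rw [← sq_abs z]; ring
end

section
/- For all real numbers x and y, |√(π/2)·(GELU(x + y) − GELU(x) − GELU(y)) − x·y| ≤ (1/4)·(|x| + |y|)³. In other words, a two-layer feed-forward network with GELU activation (hidden pre-activations x + y, x, and y, and output weights √(π/2), −√(π/2), −√(π/2)) approximately computes the product x·y, with the stated error bound. -/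
/-!
Write `Φ(x) = 1/2 + (x - r x) / √(2π)` with `r x = ∫ t in 0..x, (1 - exp (-t²/2))`.
The constant `1/2` contributes nothing to `GELU (x + y) - GELU x - GELU y`, and the term
`x` contributes `(x + y)² - x² - y² = 2xy`. Since `√(π/2) / √(2π) = 1/2`, the error is
`-(h (x + y) - h x - h y) / 2`, where `h x = x * r x`.

The function `r` is odd and monotone, so `h` is even and nonnegative. With `s = |x| + |y|`,
both `h (x + y)` and `h x + h y` lie in `[0, h s]`, so their difference is at most `h s` in
absolute value. Finally `1 - exp (-t²/2) ≤ min 1 (t²/2) ≤ t` for `t ≥ 0` gives `r s ≤ s²/2`,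
hence `h s ≤ s³/2`.
-/

open MeasureTheory

/-- The defect `x - ∫₀ˣ exp (-t²/2) dt` of the linear approximation to the Gaussian integral. -/
noncomputable def gaussDefect (x : ℝ) : ℝ := ∫ t in (0 : ℝ)..x, (1 - Real.exp (-t ^ 2 / 2))

lemma gaussDefect_intervalIntegrable (a b : ℝ) :
    IntervalIntegrable (fun t : ℝ => 1 - Real.exp (-t ^ 2 / 2)) volume a b :=
  Continuous.intervalIntegrable (by fun_prop) a b

lemma gaussDefect_monotone : Monotone gaussDefect := by
  intro a b hab
  have h := intervalIntegral.integral_interval_sub_left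
    (gaussDefect_intervalIntegrable 0 b) (gaussDefect_intervalIntegrable 0 a)
  have h0 : 0 ≤ ∫ t in a..b, (1 - Real.exp (-t ^ 2 / 2)) := by
    refine intervalIntegral.integral_nonneg hab fun t _ => ?_
    have : Real.exp (-t ^ 2 / 2) ≤ 1 := Real.exp_le_one_iff.2 (by nlinarith [sq_nonneg t])
    linarith
  unfold gaussDefect
  linarith

lemma gaussDefect_zero : gaussDefect 0 = 0 := by simp [gaussDefect]

lemma gaussDefect_neg (x : ℝ) : gaussDefect (-x) = -gaussDefect x := by
  have h := intervalIntegral.integral_comp_neg (a := 0) (b := x)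
    (fun t : ℝ => 1 - Real.exp (-t ^ 2 / 2))
  simp only [neg_sq, neg_zero] at h
  unfold gaussDefect
  rw [intervalIntegral.integral_symm, h]

lemma gaussDefect_nonneg {x : ℝ} (hx : 0 ≤ x) : 0 ≤ gaussDefect x :=
  gaussDefect_zero ▸ gaussDefect_monotone hx

lemma gaussDefect_le {s : ℝ} (hs : 0 ≤ s) : gaussDefect s ≤ s ^ 2 / 2 := by
  have h : gaussDefect s ≤ ∫ t in (0 : ℝ)..s, t := by
    refine intervalIntegral.integral_mono_on hs (gaussDefect_intervalIntegrable 0 s)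
      (Continuous.intervalIntegrable (by fun_prop) 0 s) fun t ht => ?_
    have h0 := ht.1
    have h1 := Real.add_one_le_exp (-t ^ 2 / 2)
    have h2 := Real.exp_pos (-t ^ 2 / 2)
    -- the bound `t²/2` is used for `t ≤ 1`, the bound `1` for larger `t`
    rcases le_total t 1 with h3 | h3
    · nlinarith
    · linarith
  rw [integral_id] at h
  linarith

lemma mul_gaussDefect_abs (x : ℝ) : |x| * gaussDefect |x| = x * gaussDefect x := by
  rcases abs_choice x with h | h <;> rw [h]
  rw [gaussDefect_neg]
  ring

lemma integrable_exp_neg_sq_div_two : Integrable fun t : ℝ => Real.exp (-t ^ 2 / 2) := by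
  have h := integrable_exp_neg_mul_sq (b := 1 / 2) (by norm_num)
  refine h.congr (Filter.Eventually.of_forall fun t => ?_)
  simp only
  congr 1
  ring

lemma integral_Iic_zero_exp :
    ∫ t in Set.Iic (0 : ℝ), Real.exp (-t ^ 2 / 2) = Real.sqrt (2 * Real.pi) / 2 := by
  have h := integral_gaussian_Ioi (1 / 2)
  have h2 := integral_comp_neg_Iic (0 : ℝ) fun t : ℝ => Real.exp (-(1 / 2) * t ^ 2)
  simp only [neg_zero, neg_sq] at h2
  rw [h] at h2
  rw [show 2 * Real.pi = Real.pi / (1 / 2) by ring, ← h2]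
  congr 1
  ext t
  congr 1
  ring

lemma stdNormalCdf_eq_s4 (x : ℝ) :
    stdNormalCdf x = 1 / 2 + (x - gaussDefect x) / Real.sqrt (2 * Real.pi) := by
  have hpos : 0 < Real.sqrt (2 * Real.pi) := Real.sqrt_pos.2 (by positivity)
  have hi := integrable_exp_neg_sq_div_two
  have h := intervalIntegral.integral_Iic_sub_Iic (a := 0) (b := x)
    hi.integrableOn hi.integrableOn
  have hd : gaussDefect x = x - ∫ t in (0 : ℝ)..x, Real.exp (-t ^ 2 / 2) := by
    unfold gaussDefect
    rw [intervalIntegral.integral_sub (by simp) hi.intervalIntegrable]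
    simp
  rw [integral_Iic_zero_exp] at h
  unfold stdNormalCdf
  rw [integral_const_mul, hd, ← h]
  field_simp
  ring

lemma sqrt_pi_div_two : Real.sqrt (Real.pi / 2) = Real.sqrt (2 * Real.pi) / 2 := by
  rw [show 2 * Real.pi = 2 ^ 2 * (Real.pi / 2) by ring, Real.sqrt_mul (by norm_num),
    Real.sqrt_sq (by norm_num)]
  ring

/-- A GELU network approximately computes the product `x * y`, with error at
most `(|x| + |y|)³ / 4`. -/
theorem gelu_multiplication (x y : ℝ) :
    |Real.sqrt (Real.pi / 2) * (GELU (x + y) - GELU x - GELU y) - x * y|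
      ≤ (1 / 4) * (|x| + |y|) ^ 3 := by
  have hpos : 0 < Real.sqrt (2 * Real.pi) := Real.sqrt_pos.2 (by positivity)
  have key : Real.sqrt (Real.pi / 2) * (GELU (x + y) - GELU x - GELU y) - x * y
      = -((x + y) * gaussDefect (x + y) - x * gaussDefect x - y * gaussDefect y) / 2 := by
    rw [sqrt_pi_div_two]
    simp only [GELU, stdNormalCdf_eq_s4]
    field_simp
    ring
  rw [key, ← mul_gaussDefect_abs (x + y), ← mul_gaussDefect_abs x, ← mul_gaussDefect_abs y]
  have hx := abs_nonneg x
  have hy := abs_nonneg y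
  have hxy := abs_nonneg (x + y)
  have hs : 0 ≤ |x| + |y| := by positivity
  have hle := abs_add_le x y
  have b : (|x| + |y|) * gaussDefect (|x| + |y|) ≤ (|x| + |y|) ^ 3 / 2 :=
    (mul_le_mul_of_nonneg_left (gaussDefect_le hs) hs).trans_eq (by ring)
  have b1 : |x + y| * gaussDefect |x + y| ≤ (|x| + |y|) * gaussDefect (|x| + |y|) :=
    mul_le_mul hle (gaussDefect_monotone hle) (gaussDefect_nonneg hxy) hs
  have b2 : |x| * gaussDefect |x| ≤ |x| * gaussDefect (|x| + |y|) :=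
    mul_le_mul_of_nonneg_left (gaussDefect_monotone (by linarith)) hx
  have b3 : |y| * gaussDefect |y| ≤ |y| * gaussDefect (|x| + |y|) :=
    mul_le_mul_of_nonneg_left (gaussDefect_monotone (by linarith)) hy
  have p1 := mul_nonneg hxy (gaussDefect_nonneg hxy)
  have p2 := mul_nonneg hx (gaussDefect_nonneg hx)
  have p3 := mul_nonneg hy (gaussDefect_nonneg hy)
  rw [abs_le]
  constructor <;> linarith
end

section
/- Define the layer-norm hash lh : ℝ → ℝ⁴ by lh(x) = √(2/(x² + 1)) · (x, 1, −x, −1). Then for all real numbers a and b, the dot product satisfies lh(a)·lh(b) = 4(ab + 1)/√((a² + 1)(b² + 1)) ≤ 4, with equality if and only if a = b. In particular, for a fixed query value a, the attention score lh(a)·lh(b) over keys b is uniquely maximized at b = a. -/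
/-!
The sum `lh a · lh b` collapses to `√(2/(a²+1)) √(2/(b²+1)) · 2(ab+1)`, which gives the closed form.
The bound and its equality case are Cauchy–Schwarz for `(a, 1)` and `(b, 1)`, through Lagrange's
identity `(a²+1)(b²+1) - (ab+1)² = (a-b)²`.
-/

/-- The layer-norm hash `lh(x) = √(2/(x²+1)) · (x, 1, −x, −1)`. -/
noncomputable def lh (x : ℝ) : Fin 4 → ℝ :=
  fun i => Real.sqrt (2 / (x ^ 2 + 1)) * ![x, 1, -x, -1] i

/-- The dot product of layer-norm hashes equals
`4(ab+1)/√((a²+1)(b²+1))`, is at most `4`, and equals `4` iff `a = b`;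
hence for a fixed query `a`, the attention score is uniquely maximized at
the key `b = a`. -/
theorem layernorm_hash_dot
    (a b : ℝ) :
    (∑ i, lh a i * lh b i)
        = 4 * (a * b + 1) / Real.sqrt ((a ^ 2 + 1) * (b ^ 2 + 1)) ∧
    (∑ i, lh a i * lh b i) ≤ 4 ∧
    ((∑ i, lh a i * lh b i) = 4 ↔ a = b) := by
  have hA : 0 < a ^ 2 + 1 := by positivity
  have hB : 0 < b ^ 2 + 1 := by positivity
  have hs : 0 < Real.sqrt ((a ^ 2 + 1) * (b ^ 2 + 1)) := Real.sqrt_pos.2 (mul_pos hA hB)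
  have hsq : Real.sqrt ((a ^ 2 + 1) * (b ^ 2 + 1)) ^ 2 = (a ^ 2 + 1) * (b ^ 2 + 1) :=
    Real.sq_sqrt (mul_pos hA hB).le
  have hprod : Real.sqrt (2 / (a ^ 2 + 1)) * Real.sqrt (2 / (b ^ 2 + 1))
      = 2 / Real.sqrt ((a ^ 2 + 1) * (b ^ 2 + 1)) := by
    rw [← Real.sqrt_mul (by positivity), div_mul_div_comm, Real.sqrt_div (by norm_num),
      Real.sqrt_mul_self (by norm_num)]
  have key : (∑ i, lh a i * lh b i)
      = 4 * (a * b + 1) / Real.sqrt ((a ^ 2 + 1) * (b ^ 2 + 1)) := by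
    have h : (∑ i, lh a i * lh b i)
        = (Real.sqrt (2 / (a ^ 2 + 1)) * Real.sqrt (2 / (b ^ 2 + 1))) * (2 * (a * b + 1)) := by
      simp only [lh, Fin.sum_univ_four, Matrix.cons_val]
      ring
    rw [h, hprod]
    ring
  refine ⟨key, ?_, ?_⟩
  · rw [key, div_le_iff₀ hs]
    have : a * b + 1 ≤ Real.sqrt ((a ^ 2 + 1) * (b ^ 2 + 1)) :=
      Real.le_sqrt_of_sq_le (by nlinarith [sq_nonneg (a - b)])
    linarith
  · rw [key, div_eq_iff hs.ne']
    constructor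
    · intro h
      have h1 : a * b + 1 = Real.sqrt ((a ^ 2 + 1) * (b ^ 2 + 1)) := by linarith
      -- Lagrange's identity: `(a² + 1)(b² + 1) - (ab + 1)² = (a - b)²`.
      have h2 : (a - b) ^ 2 = 0 := by
        rw [← h1] at hsq
        linarith
      exact sub_eq_zero.1 (pow_eq_zero_iff two_ne_zero |>.1 h2)
    · rintro rfl
      rw [Real.sqrt_mul_self hA.le]
      ring
end

section
/- For every real ε with 0 < ε < 1 and every integer N ≥ 1, setting m = ⌈12·log(2N)/ε²⌉, there exist vectors x_1, …, x_N ∈ {−1/√m, +1/√m}^m that are almost orthogonal: x_i · x_i = 1 for every i, and |x_i · x_j| ≤ ε for all i ≠ j. In particular, N almost-orthogonal unit vectors exist in dimension m = O(log N / ε²). -/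
/-! The vectors are chosen greedily. Given sign vectors `a₁, …, aₙ ∈ {±1}^m` with `n ≤ N`, average
the potential `∑ i, (exp (ε aᵢ·s) + exp (-ε aᵢ·s))` over all `s ∈ {±1}^m`. Each exponential factors
over the coordinates and has mean `(cosh ε)^m ≤ exp (m ε² / 2)`, so some `s` has potential at most
`2n exp (m ε² / 2)`. As `2n ≤ 2N ≤ exp (m ε² / 2)` by the choice of `m`, this `s` satisfies
`exp (ε |aᵢ·s|) ≤ exp (m ε²)`, that is `|aᵢ·s| ≤ ε m`, for every `i`, and can be adjoined to the
family (`exists_sign_vector`). Dividing by `√m` gives unit vectors. -/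

/-- The moment generating function of a Rademacher sum, before normalising by `2 ^ m`. -/
lemma sum_exp_sign_vectors {m : ℕ} (c : ℝ) (a : Fin m → ℝ) (ha : ∀ k, a k = -1 ∨ a k = 1) :
    ∑ s ∈ Fintype.piFinset (fun _ : Fin m => ({1, -1} : Finset ℝ)),
      Real.exp (c * ∑ k, a k * s k) = (2 * Real.cosh c) ^ m := by
  have h1 : ∀ s : Fin m → ℝ, Real.exp (c * ∑ k, a k * s k)
      = ∏ k, Real.exp (c * (a k * s k)) := by
    intro s
    rw [Finset.mul_sum, Real.exp_sum]
  simp_rw [h1]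
  rw [← Finset.prod_univ_sum (fun _ : Fin m => ({1, -1} : Finset ℝ))
    (fun k x => Real.exp (c * (a k * x)))]
  have h2 : ∀ k, ∑ x ∈ ({1, -1} : Finset ℝ), Real.exp (c * (a k * x)) = 2 * Real.cosh c := by
    intro k
    rw [Finset.sum_pair (by norm_num), Real.cosh_eq]
    rcases ha k with h | h <;> rw [h] <;> ring_nf
  simp [h2]

/-- The greedy step: a family of at most `N` sign vectors admits a further sign vector almost
orthogonal to all of them. -/
lemma exists_sign_vector {m n N : ℕ} (ε : ℝ) (hε0 : 0 < ε) (hnN : n ≤ N) (hN : 1 ≤ N)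
    (hm : Real.log (2 * N) ≤ m * ε ^ 2 / 2)
    (a : Fin n → Fin m → ℝ) (ha : ∀ i k, a i k = -1 ∨ a i k = 1) :
    ∃ s : Fin m → ℝ, (∀ k, s k = -1 ∨ s k = 1) ∧ ∀ i, |∑ k, a i k * s k| ≤ ε * m := by
  set S := Fintype.piFinset (fun _ : Fin m => ({1, -1} : Finset ℝ)) with hS
  have hcard : (S.card : ℝ) = 2 ^ m := by
    simp [hS, Finset.card_pair (show (1 : ℝ) ≠ -1 by norm_num)]
  have hne : S.Nonempty := ⟨fun _ => 1, by simp [hS]⟩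
  have hcosh : (2 * Real.cosh ε) ^ m ≤ 2 ^ m * Real.exp (m * ε ^ 2 / 2) := by
    rw [mul_pow]
    have : Real.cosh ε ^ m ≤ Real.exp (ε ^ 2 / 2) ^ m :=
      pow_le_pow_left₀ (Real.cosh_pos ε).le (Real.cosh_le_exp_half_sq ε) m
    rw [← Real.exp_nat_mul, ← mul_div_assoc] at this
    gcongr
  have hsum : ∑ s ∈ S, ∑ i, (Real.exp (ε * ∑ k, a i k * s k) + Real.exp (-ε * ∑ k, a i k * s k))
      ≤ ∑ s ∈ S, 2 * n * Real.exp (m * ε ^ 2 / 2) := by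
    rw [Finset.sum_comm]
    simp only [Finset.sum_add_distrib]
    simp only [hS, sum_exp_sign_vectors _ _ (ha _), Real.cosh_neg]
    simp only [← hS, Finset.sum_const, nsmul_eq_mul, hcard, Finset.card_univ, Fintype.card_fin]
    nlinarith [mul_le_mul_of_nonneg_left hcosh (Nat.cast_nonneg (α := ℝ) n)]
  obtain ⟨s, hs, hle⟩ := Finset.exists_le_of_sum_le hne hsum
  refine ⟨s, fun k => ?_, fun i => ?_⟩
  · have := Fintype.mem_piFinset.1 hs k
    simp only [Finset.mem_insert, Finset.mem_singleton] at this
    exact this.symm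
  · have hi := (Finset.single_le_sum (f := fun i => Real.exp (ε * ∑ k, a i k * s k)
      + Real.exp (-ε * ∑ k, a i k * s k)) (fun i _ => by positivity) (Finset.mem_univ i)).trans hle
    have hN' : (1 : ℝ) ≤ N := by exact_mod_cast hN
    have hn' : (n : ℝ) ≤ N := by exact_mod_cast hnN
    have h2N : (2 * N : ℝ) ≤ Real.exp (m * ε ^ 2 / 2) :=
      (Real.log_le_iff_le_exp (by linarith)).1 hm
    have hfin : 2 * n * Real.exp (m * ε ^ 2 / 2) ≤ Real.exp (ε * (ε * m)) := by
      calc 2 * n * Real.exp (m * ε ^ 2 / 2)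
          ≤ Real.exp (m * ε ^ 2 / 2) * Real.exp (m * ε ^ 2 / 2) := by gcongr; linarith
        _ = Real.exp (ε * (ε * m)) := by rw [← Real.exp_add]; ring_nf
    have hi' := hi.trans hfin
    have p1 := Real.exp_pos (ε * ∑ k, a i k * s k)
    have p2 := Real.exp_pos (-ε * ∑ k, a i k * s k)
    have e1 := Real.exp_le_exp.1 (show Real.exp (ε * ∑ k, a i k * s k) ≤ _ by linarith)
    have e2 := Real.exp_le_exp.1 (show Real.exp (-ε * ∑ k, a i k * s k) ≤ _ by linarith)
    rw [neg_mul, ← mul_neg] at e2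
    exact abs_le'.2 ⟨le_of_mul_le_mul_left e1 hε0, le_of_mul_le_mul_left e2 hε0⟩

lemma exists_sign_family {m N : ℕ} (ε : ℝ) (hε0 : 0 < ε) (hN : 1 ≤ N)
    (hm : Real.log (2 * N) ≤ m * ε ^ 2 / 2) (n : ℕ) (hn : n ≤ N) :
    ∃ a : Fin n → Fin m → ℝ, (∀ i k, a i k = -1 ∨ a i k = 1) ∧
      ∀ i j, i ≠ j → |∑ k, a i k * a j k| ≤ ε * m := by
  induction n with
  | zero => exact ⟨fun i => i.elim0, fun i => i.elim0, fun i => i.elim0⟩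
  | succ n ih =>
    obtain ⟨a, ha, hab⟩ := ih (by omega)
    obtain ⟨s, hs, hsa⟩ := exists_sign_vector ε hε0 (by omega : n ≤ N) hN hm a ha
    refine ⟨Fin.cons s a, fun i => ?_, fun i j => ?_⟩
    · refine Fin.cases ?_ (fun i => ?_) i
      · simpa using hs
      · simpa using ha i
    · refine Fin.cases ?_ (fun i => ?_) i <;> refine Fin.cases ?_ (fun j => ?_) j
      · simp
      · intro _
        simpa [mul_comm] using hsa j
      · intro _
        simpa using hsa i
      · intro h
        simpa using hab i j (fun e => h (by rw [e]))


/-- Almost-orthogonal vectors: for every `0 < ε < 1` and `N ≥ 1`, in dimension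
`m = ⌈12·log(2N)/ε²⌉` there exist `N` sign vectors (entries `±1/√m`) that are
unit vectors and pairwise have dot products of absolute value at most `ε`. -/
theorem almost_orthogonal_vectors_exist
    (ε : ℝ) (hε0 : 0 < ε) (hε1 : ε < 1) (N : ℕ) (hN : 1 ≤ N) :
    ∃ x : Fin N → Fin ⌈12 * Real.log (2 * N) / ε ^ 2⌉₊ → ℝ,
      (∀ i j, x i j = -1 / Real.sqrt ⌈12 * Real.log (2 * N) / ε ^ 2⌉₊ ∨
              x i j = 1 / Real.sqrt ⌈12 * Real.log (2 * N) / ε ^ 2⌉₊) ∧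
      (∀ i, ∑ k, x i k * x i k = 1) ∧
      (∀ i j, i ≠ j → |∑ k, x i k * x j k| ≤ ε) := by
  have hN' : (1 : ℝ) ≤ N := by exact_mod_cast hN
  have hlog : 0 < Real.log (2 * N) := Real.log_pos (by linarith)
  have hpos : 0 < 12 * Real.log (2 * N) / ε ^ 2 := by positivity
  have hceil := Nat.le_ceil (12 * Real.log (2 * N) / ε ^ 2)
  generalize ⌈12 * Real.log (2 * N) / ε ^ 2⌉₊ = m at hceil ⊢
  have hm0 : (0 : ℝ) < m := hpos.trans_le hceil
  rw [div_le_iff₀ (by positivity)] at hceil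
  obtain ⟨a, ha, hab⟩ := exists_sign_family ε hε0 hN
    (show Real.log (2 * N) ≤ m * ε ^ 2 / 2 by linarith) N le_rfl
  have hdot : ∀ i j, ∑ k, a i k / √(m : ℝ) * (a j k / √(m : ℝ)) = (∑ k, a i k * a j k) / m := by
    intro i j
    rw [Finset.sum_div]
    refine Finset.sum_congr rfl fun k _ => ?_
    rw [div_mul_div_comm, Real.mul_self_sqrt hm0.le]
  refine ⟨fun i k => a i k / √(m : ℝ), fun i k => ?_, fun i => ?_, fun i j hij => ?_⟩
  · rcases ha i k with h | h <;> simp [h]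
  · rw [hdot]
    have : ∀ k, a i k * a i k = 1 := fun k => by rcases ha i k with h | h <;> simp [h]
    simp [this, hm0.ne']
  · rw [hdot, abs_div, abs_of_pos hm0, div_le_iff₀ hm0]
    exact hab i j hij
end
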